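/- (Score decomposition for arc-hybrid, the bookkeeping underlying the score-annotated deduction rules.) Let t be a complete arc-hybrid transition sequence for a sentence of length n ≥ 1 and let (g_sh, g_rr, g_rl) be any arc-hybrid parameterization. For each index i ∈ {0,…,n}, let k_i be the stack-top feature (⊥ if the stack is empty) of the configuration in which i is shifted; for each i ∈ {1,…,n}, let p_i be the buffer-front feature (n+1 if the buffer is empty) of the configuration in which i is popped. Then G(t) = g_sh(⊥, 0) + Σ_{i popped by rl} ( g_sh(k_i, i) + g_rl(i, p_i) ) + Σ_{i popped by rr} ( g_sh(k_i, i) + g_rr(i, p_i) ), and moreover A(t) = { (p_i, i) : i popped by rl } ∪ { (k_i, i) : i popped by rr }. -/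

import Mathlib

/-- A parser configuration: a stack of indices (head of the list = top of stack),
a buffer of indices (head of the list = front of buffer), and a set of arcs
`(h, m)` meaning `h` is the head of modifier `m`. -/
structure Config where
  stack : List ℕ
  buffer : List ℕ
  arcs : Finset (ℕ × ℕ)

/-- Initial configuration for a sentence of length `n`:
empty stack, buffer `[0, 1, …, n]` (ROOT is index 0), empty arc set. -/
def initConfig (n : ℕ) : Config := ⟨[], List.range (n + 1), ∅⟩

/-- Stack-top feature of a configuration: `none` plays the role of the dummy index ⊥
used when the stack is empty. -/
def stackFeat (c : Config) : Option ℕ := c.stack.head?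

/-- Buffer-front feature of a configuration: the end-marker index `n + 1`
when the buffer is empty. -/
def bufFeat (n : ℕ) (c : Config) : ℕ := c.buffer.headD (n + 1)

/-- Arc-eager transition labels. -/
inductive ETrans
  | sh | rl | ra | re
deriving DecidableEq

/-- Single arc-eager transitions between configurations. -/
inductive EStep : Config → ETrans → Config → Prop
  | sh (σ b β A) : EStep ⟨σ, b :: β, A⟩ .sh ⟨b :: σ, β, A⟩
  | rl (s σ b β A) (h : ∀ x, (x, s) ∉ A) :
      EStep ⟨s :: σ, b :: β, A⟩ .rl ⟨σ, b :: β, insert (b, s) A⟩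
  | ra (s σ b β A) :
      EStep ⟨s :: σ, b :: β, A⟩ .ra ⟨b :: s :: σ, β, insert (s, b) A⟩
  | re (s σ β A) (h : ∃ x, (x, s) ∈ A) :
      EStep ⟨s :: σ, β, A⟩ .re ⟨σ, β, A⟩

/-- `ETrace c t c'` holds when `t` is a list of (configuration, transition) pairs,
each transition taken in the recorded configuration, leading from `c` to `c'`. -/
inductive ETrace : Config → List (Config × ETrans) → Config → Prop
  | nil (c) : ETrace c [] c
  | cons {c c' cf : Config} {τ : ETrans} {rest} :
      EStep c τ c' → ETrace c' rest cf → ETrace c ((c, τ) :: rest) cf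

/-- Score of an arc-eager transition sequence under parameterization
`(fsh, fra, frl, fre)`: the sum, over the transitions, of the corresponding
scoring function evaluated at the feature pair of the configuration in which
the transition is taken. -/
def escore (n : ℕ) (fsh fra frl fre : Option ℕ → ℕ → ℝ)
    (t : List (Config × ETrans)) : ℝ :=
  (t.map fun e =>
    (match e.2 with
      | ETrans.sh => fsh
      | ETrans.ra => fra
      | ETrans.rl => frl
      | ETrans.re => fre) (stackFeat e.1) (bufFeat n e.1)).sum

/-- Arc-hybrid transition labels. -/
inductive HTrans
  | sh | rr | rl
deriving DecidableEq

/-- Single arc-hybrid transitions between configurations. -/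
inductive HStep : Config → HTrans → Config → Prop
  | sh (σ b β A) : HStep ⟨σ, b :: β, A⟩ .sh ⟨b :: σ, β, A⟩
  | rr (s0 s1 σ β A) :
      HStep ⟨s0 :: s1 :: σ, β, A⟩ .rr ⟨s1 :: σ, β, insert (s1, s0) A⟩
  | rl (s σ b β A) :
      HStep ⟨s :: σ, b :: β, A⟩ .rl ⟨σ, b :: β, insert (b, s) A⟩

/-- `HTrace c t c'` holds when `t` is a list of (configuration, transition) pairs,
each transition taken in the recorded configuration, leading from `c` to `c'`. -/
inductive HTrace : Config → List (Config × HTrans) → Config → Prop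
  | nil (c) : HTrace c [] c
  | cons {c c' cf : Config} {τ : HTrans} {rest} :
      HStep c τ c' → HTrace c' rest cf → HTrace c ((c, τ) :: rest) cf

/-- Score of an arc-hybrid transition sequence under parameterization
`(gsh, grr, grl)`. -/
def hscore (n : ℕ) (gsh grr grl : Option ℕ → ℕ → ℝ)
    (t : List (Config × HTrans)) : ℝ :=
  (t.map fun e =>
    (match e.2 with
      | HTrans.sh => gsh
      | HTrans.rr => grr
      | HTrans.rl => grl) (stackFeat e.1) (bufFeat n e.1)).sum

/-- Index `i` is popped by an rl transition somewhere in `t`. -/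
def poppedByRl (t : List (Config × HTrans)) (i : ℕ) : Bool :=
  t.any fun e => e.2 == HTrans.rl && e.1.stack.head? == some i

/-- Index `i` is popped by an rr transition somewhere in `t`. -/
def poppedByRr (t : List (Config × HTrans)) (i : ℕ) : Bool :=
  t.any fun e => e.2 == HTrans.rr && e.1.stack.head? == some i

theorem orA {a z l r s : Prop} (h : a ↔ z ∨ l ∨ r) : (s ∨ a) ↔ z ∨ l ∨ s ∨ r := by tauto

theorem orB {a z l r s : Prop} (h : a ↔ z ∨ l ∨ r) : (s ∨ a) ↔ z ∨ (s ∨ l) ∨ r := by tauto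

theorem orC {a l r s : Prop} : (s ∨ a) ∨ l ∨ r ↔ a ∨ l ∨ s ∨ r := by tauto

theorem orD {a l r s : Prop} : (s ∨ a) ∨ l ∨ r ↔ a ∨ (s ∨ l) ∨ r := by tauto

theorem hybrid_aux (n : ℕ) (gsh grr grl : Option ℕ → ℕ → ℝ)
    (k : ℕ → Option ℕ) (p : ℕ → ℕ) (c cf : Config) (t : List (Config × HTrans))
    (ht : HTrace c t cf) (hs : cf.stack = [0]) (hb : cf.buffer = [])
    (hk : ∀ e ∈ t, e.2 = HTrans.sh →
        ∀ i, e.1.buffer.head? = some i → stackFeat e.1 = k i)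
    (hp : ∀ e ∈ t, (e.2 = HTrans.rr ∨ e.2 = HTrans.rl) →
        ∀ i, e.1.stack.head? = some i → bufFeat n e.1 = p i)
    (hnd : (c.stack ++ c.buffer).Nodup)
    (hl : ∀ s σ, (s :: σ) <:+ c.stack → k s = σ.head?) :
    ∃ L R : Finset ℕ, (∀ i, poppedByRl t i = true ↔ i ∈ L) ∧
      (∀ i, poppedByRr t i = true ↔ i ∈ R) ∧ Disjoint L R ∧ 0 ∉ L ∧ 0 ∉ R ∧
      (∀ i, i ∈ c.stack ++ c.buffer ↔ i = 0 ∨ i ∈ L ∨ i ∈ R) ∧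
      hscore n gsh grr grl t = (c.buffer.map fun i => gsh (k i) i).sum
        + ∑ i ∈ L, grl (some i) (p i) + ∑ i ∈ R, grr (some i) (p i) ∧
      cf.arcs = c.arcs ∪ (L.image (fun i => (p i, i)) ∪
        R.image (fun i => ((k i).getD 0, i))) := by
  induction ht with
  | nil c =>
    refine ⟨∅, ∅, ?_⟩
    simp [poppedByRl, poppedByRr, hscore, hs, hb]
  | @cons c c' cf τ rest hstep htr ih =>
    have hk' := fun e he => hk e (List.mem_cons_of_mem _ he)
    have hp' := fun e he => hp e (List.mem_cons_of_mem _ he)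
    have hk0 := hk _ List.mem_cons_self
    have hp0 := hp _ List.mem_cons_self
    cases hstep with
    | sh σ b β A =>
      have hkb : σ.head? = k b := hk0 rfl b rfl
      obtain ⟨L, R, h1, h2, h3, h4, h5, h6, h7, h8⟩ := ih hs hb hk' hp'
        (by
          have := (List.perm_middle (a := b) (l₁ := σ) (l₂ := β)).nodup_iff.1 hnd
          simpa using this)
        (by
          intro s σ' h
          rcases List.suffix_cons_iff.1 h with h | h
          · injection h with ha hb
            subst ha hb
            exact hkb.symm
          · exact hl s σ' h)
      refine ⟨L, R, ?_, ?_, h3, h4, h5, ?_, ?_, h8⟩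
      · intro i
        rw [← h1]
        simp [poppedByRl]
      · intro i
        rw [← h2]
        simp [poppedByRr]
      · intro i
        rw [← h6]
        simp
        tauto
      · simp only [hscore, List.map_cons, List.sum_cons] at h7 ⊢
        rw [h7]
        simp [stackFeat, bufFeat, hkb]
        ring
    | rr s0 s1 σ β A =>
      have hps : bufFeat n ⟨s0 :: s1 :: σ, β, A⟩ = p s0 := hp0 (Or.inl rfl) s0 rfl
      have hks : k s0 = some s1 := hl s0 (s1 :: σ) List.suffix_rfl
      have hnd' : s0 ∉ (s1 :: σ) ++ β ∧ ((s1 :: σ) ++ β).Nodup := by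
        have := hnd
        rw [List.cons_append, List.nodup_cons] at this
        exact this
      obtain ⟨L, R, h1, h2, h3, h4, h5, h6, h7, h8⟩ := ih hs hb hk' hp' hnd'.2
        (fun s σ' h => hl s σ' (h.trans (List.suffix_cons _ _)))
      have hn0 := hnd'.1
      have h6s := h6 s0
      simp only [] at h6s
      rw [h6s] at hn0
      push Not at hn0
      obtain ⟨n0, nL, nR⟩ := hn0
      refine ⟨L, insert s0 R, ?_, ?_, ?_, h4, ?_, ?_, ?_, ?_⟩
      · intro i
        rw [← h1]
        simp [poppedByRl]
      · intro i
        rw [Finset.mem_insert, ← h2]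
        rw [eq_comm (a := i)]
        simp [poppedByRr]
      · simp [h3, nL]
      · simp [h5, n0.symm]
      · intro i
        rw [Finset.mem_insert]
        exact List.mem_cons.trans (orA (h6 i))
      · simp only [hscore, List.map_cons, List.sum_cons] at h7 ⊢
        rw [h7, hps, Finset.sum_insert nR]
        simp [stackFeat]
        ring
      · rw [h8]
        ext x
        simp only [hks, Finset.image_insert, Finset.mem_union, Finset.mem_insert,
          Option.getD_some]
        exact orC
    | rl s σ b β A =>
      have hps : b = p s := hp0 (Or.inr rfl) s rfl
      have hnd' : s ∉ σ ++ (b :: β) ∧ (σ ++ (b :: β)).Nodup := by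
        have := hnd
        rw [List.cons_append, List.nodup_cons] at this
        exact this
      obtain ⟨L, R, h1, h2, h3, h4, h5, h6, h7, h8⟩ := ih hs hb hk' hp' hnd'.2
        (fun s σ' h => hl s σ' (h.trans (List.suffix_cons _ _)))
      have hn0 := hnd'.1
      have h6s := h6 s
      simp only [] at h6s
      rw [h6s] at hn0
      push Not at hn0
      obtain ⟨n0, nL, nR⟩ := hn0
      refine ⟨insert s L, R, ?_, ?_, ?_, ?_, h5, ?_, ?_, ?_⟩
      · intro i
        rw [Finset.mem_insert, ← h1]
        rw [eq_comm (a := i)]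
        simp [poppedByRl]
      · intro i
        rw [← h2]
        simp [poppedByRr]
      · simp [h3, nR]
      · simp [h4, n0.symm]
      · intro i
        rw [Finset.mem_insert]
        exact List.mem_cons.trans (orB (h6 i))
      · simp only [hscore, List.map_cons, List.sum_cons] at h7 ⊢
        rw [h7, Finset.sum_insert nL]
        simp [stackFeat, bufFeat, ← hps]
        ring
      · rw [h8]
        ext x
        simp only [← hps, Finset.image_insert, Finset.mem_union, Finset.mem_insert,
          Option.getD_some]
        exact orD

/-- **Score decomposition for arc-hybrid** (the bookkeeping underlying the
score-annotated deduction rules). Here `k i` is the stack-top feature of the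
configuration in which `i` is shifted and `p i` is the buffer-front feature of
the configuration in which `i` is popped (encoded by the hypotheses `hk`, `hp`,
which pin these values down since each index is shifted/popped exactly once). -/
theorem arc_hybrid_score_decomposition
    (n : ℕ) (hn : 1 ≤ n)
    (gsh grr grl : Option ℕ → ℕ → ℝ)
    (t : List (Config × HTrans)) (A : Finset (ℕ × ℕ))
    (ht : HTrace (initConfig n) t ⟨[0], [], A⟩)
    (k : ℕ → Option ℕ) (p : ℕ → ℕ)
    (hk : ∀ e ∈ t, e.2 = HTrans.sh →
        ∀ i, e.1.buffer.head? = some i → stackFeat e.1 = k i)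
    (hp : ∀ e ∈ t, (e.2 = HTrans.rr ∨ e.2 = HTrans.rl) →
        ∀ i, e.1.stack.head? = some i → bufFeat n e.1 = p i) :
    hscore n gsh grr grl t =
        gsh none 0
        + ∑ i ∈ (Finset.Icc 1 n).filter (fun i => poppedByRl t i = true),
            (gsh (k i) i + grl (some i) (p i))
        + ∑ i ∈ (Finset.Icc 1 n).filter (fun i => poppedByRr t i = true),
            (gsh (k i) i + grr (some i) (p i))
    ∧ A = ((Finset.Icc 1 n).filter (fun i => poppedByRl t i = true)).image
              (fun i => (p i, i))
          ∪ ((Finset.Icc 1 n).filter (fun i => poppedByRr t i = true)).image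
              (fun i => ((k i).getD 0, i)) := by
  have hk0 : k 0 = none := by
    have hr : initConfig n = ⟨[], 0 :: (List.range n).map Nat.succ, ∅⟩ := by
      simp [initConfig, List.range_succ_eq_map]
    rw [hr] at ht
    cases ht with
    | cons hstep _ =>
      cases hstep with
      | sh => exact (hk _ List.mem_cons_self rfl 0 rfl).symm
  obtain ⟨L, R, h1, h2, h3, h4, h5, h6, h7, h8⟩ :=
    hybrid_aux n gsh grr grl k p _ _ t ht rfl rfl hk hp
      (by simpa [initConfig] using List.nodup_range)
      (by intro s σ h; simp [initConfig] at h)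
  simp only [initConfig, List.nil_append, List.mem_range] at h6 h7 h8
  have hL : (Finset.Icc 1 n).filter (fun i => poppedByRl t i = true) = L := by
    ext i
    have := h6 i
    simp only [Finset.mem_filter, Finset.mem_Icc, h1]
    constructor
    · exact fun h => h.2
    · intro h
      have h0 : i ≠ 0 := fun e => h4 (e ▸ h)
      have := this.2 (Or.inr (Or.inl h))
      exact ⟨by omega, h⟩
  have hR : (Finset.Icc 1 n).filter (fun i => poppedByRr t i = true) = R := by
    ext i
    have := h6 i
    simp only [Finset.mem_filter, Finset.mem_Icc, h2]
    constructor
    · exact fun h => h.2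
    · intro h
      have h0 : i ≠ 0 := fun e => h5 (e ▸ h)
      have := this.2 (Or.inr (Or.inr h))
      exact ⟨by omega, h⟩
  rw [hL, hR]
  refine ⟨?_, by simpa using h8⟩
  have hset : Finset.range (n + 1) = insert 0 (L ∪ R) := by
    ext i
    simp [h6 i]
  have hsum : ((List.range (n + 1)).map fun i => gsh (k i) i).sum
      = ∑ i ∈ Finset.range (n + 1), gsh (k i) i := rfl
  rw [h7, hsum, hset, Finset.sum_insert (by simp [h4, h5]), Finset.sum_union h3,
    Finset.sum_add_distrib, Finset.sum_add_distrib, hk0]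
  ring
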